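/- Let z₀, γ₀ ∈ 𝔻 and γ₁ ∈ 𝔻. Let f ∈ ℋ satisfy f(z₀) = γ₀ and H¹f(z₀) = γ₁. Then |f''(z₀) − c₂| = ρ₂ if and only if there exists α ∈ ℂ with |α| = 1 such that f(z) = T_{γ₀}(T_{−z₀}(z)·T_{γ₁}(α·T_{−z₀}(z))) for all z ∈ 𝔻. -/

import Mathlib

open Complex Metric

/-- `ℋ`: analytic self-maps of the open unit disk. -/
def Hclass (f : ℂ → ℂ) : Prop :=
  DifferentiableOn ℂ f (ball (0 : ℂ) 1) ∧ Set.MapsTo f (ball (0 : ℂ) 1) (ball (0 : ℂ) 1)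

/-- The Möbius transformation `T_a(z) = (z + a)/(1 + conj(a) z)`. -/
noncomputable def T (a z : ℂ) : ℂ := (z + a) / (1 + (starRingEnd ℂ) a * z)

/-- The (first-order) hyperbolic derivative `H¹f(z) = (1-|z|²)f'(z)/(1-|f(z)|²)`. -/
noncomputable def H1 (f : ℂ → ℂ) (z : ℂ) : ℂ :=
  ((1 - ‖z‖ ^ 2 : ℝ) : ℂ) * deriv f z / ((1 - ‖f z‖ ^ 2 : ℝ) : ℂ)

/-!
Dividing the Möbius-normalised map `T_{-f(z₀)} ∘ f` by `T_{-z₀}` gives the hyperbolic difference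
quotient `q`, which the Schwarz lemma makes another self-map of the disk, with `q(z₀) = H¹f(z₀)`.
Differentiating `(f - f(z₀)) (1 - conj(z₀) z) = (z - z₀) (1 - conj(f(z₀)) f) q` twice at `z₀` shows
that `f''(z₀) - c₂ = ρ₂ · H¹q(z₀)`. Hence equality holds exactly when `|H¹q(z₀)| = 1`, which by the
rigidity case of the Schwarz lemma for `q` means `q = T_{γ₁}(α T_{-z₀})` with `|α| = 1`.
-/

open scoped ComplexConjugate Topology

local notation "𝔻" => ball (0 : ℂ) 1

lemma iteratedDeriv_two_mul_affine {𝕜 : Type*} [NontriviallyNormedField 𝕜] {u : 𝕜 → 𝕜} {x : 𝕜}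
    (hu : ContDiffAt 𝕜 2 u x) (a b : 𝕜) :
    iteratedDeriv 2 (fun y ↦ u y * (a * y + b)) x =
      iteratedDeriv 2 u x * (a * x + b) + 2 * a * deriv u x := by
  have hderiv : deriv (fun y ↦ a * y + b) = fun _ ↦ a := by
    ext y
    simp
  have hderiv₂ : iteratedDeriv 2 (fun y ↦ a * y + b) x = 0 := by
    rw [iteratedDeriv_succ, iteratedDeriv_one, hderiv, deriv_const]
  rw [iteratedDeriv_fun_mul hu (by fun_prop)]
  simp only [Finset.sum_range_succ, Finset.sum_range_zero, Nat.reduceSub, hderiv₂, hderiv,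
    iteratedDeriv_one, iteratedDeriv_zero, Nat.choose_zero_right, Nat.choose_one_right,
    Nat.choose_self]
  push_cast
  ring

section Mobius

variable {a z : ℂ}

lemma neg_mem_unitBall (ha : a ∈ 𝔻) : -a ∈ 𝔻 := by simpa using ha

lemma one_sub_norm_sq_pos (ha : a ∈ 𝔻) : 0 < 1 - ‖a‖ ^ 2 := by
  nlinarith [norm_nonneg a, mem_ball_zero_iff.mp ha]

lemma ofReal_one_sub_norm_sq_ne_zero (ha : a ∈ 𝔻) : ((1 - ‖a‖ ^ 2 : ℝ) : ℂ) ≠ 0 :=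
  ofReal_ne_zero.mpr (one_sub_norm_sq_pos ha).ne'

lemma ofReal_one_sub_norm_sq (a : ℂ) : ((1 - ‖a‖ ^ 2 : ℝ) : ℂ) = 1 - conj a * a := by
  rw [conj_mul']
  push_cast
  rfl

lemma norm_one_add_conj_mul_sq_sub_norm_add_sq (a z : ℂ) :
    ‖1 + conj a * z‖ ^ 2 - ‖z + a‖ ^ 2 = (1 - ‖a‖ ^ 2) * (1 - ‖z‖ ^ 2) := by
  simp only [← normSq_eq_norm_sq, normSq_apply, add_re, add_im, one_re, one_im, mul_re, mul_im,
    conj_re, conj_im]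
  ring

lemma norm_add_lt_norm_one_add_conj_mul (ha : a ∈ 𝔻) (hz : z ∈ 𝔻) :
    ‖z + a‖ < ‖1 + conj a * z‖ := by
  refine lt_of_pow_lt_pow_left₀ 2 (norm_nonneg _) ?_
  have hpos := mul_pos (one_sub_norm_sq_pos ha) (one_sub_norm_sq_pos hz)
  linarith [norm_one_add_conj_mul_sq_sub_norm_add_sq a z]

lemma one_add_conj_mul_ne_zero (ha : a ∈ 𝔻) (hz : z ∈ 𝔻) : 1 + conj a * z ≠ 0 :=
  norm_pos_iff.mp ((norm_nonneg _).trans_lt (norm_add_lt_norm_one_add_conj_mul ha hz))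

lemma T_zero_right (a : ℂ) : T a 0 = a := by simp [T]

lemma T_neg_self (a : ℂ) : T (-a) a = 0 := by simp [T]

lemma T_ne_zero (ha : a ∈ 𝔻) (hz : z ∈ 𝔻) (hza : z ≠ -a) : T a z ≠ 0 :=
  div_ne_zero (fun h ↦ hza (eq_neg_of_add_eq_zero_left h)) (one_add_conj_mul_ne_zero ha hz)

lemma T_mem_unitBall (ha : a ∈ 𝔻) (hz : z ∈ 𝔻) : T a z ∈ 𝔻 := by
  have hlt := norm_add_lt_norm_one_add_conj_mul ha hz
  rw [mem_ball_zero_iff, T, norm_div]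
  exact (div_lt_one ((norm_nonneg _).trans_lt hlt)).mpr hlt

lemma T_T_neg (ha : a ∈ 𝔻) (hz : z ∈ 𝔻) : T a (T (-a) z) = z := by
  have hw : T (-a) z ∈ 𝔻 := T_mem_unitBall (neg_mem_unitBall ha) hz
  have hcancel : T (-a) z * (1 + conj (-a) * z) = z + -a :=
    div_mul_cancel₀ _ (one_add_conj_mul_ne_zero (neg_mem_unitBall ha) hz)
  rw [map_neg] at hcancel
  rw [T, div_eq_iff (one_add_conj_mul_ne_zero ha hw)]
  linear_combination hcancel

lemma T_neg_T (ha : a ∈ 𝔻) (hz : z ∈ 𝔻) : T (-a) (T a z) = z := by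
  simpa using T_T_neg (neg_mem_unitBall ha) hz

lemma eq_T_iff_T_neg_eq {w : ℂ} (ha : a ∈ 𝔻) (hw : w ∈ 𝔻) (hz : z ∈ 𝔻) :
    w = T a z ↔ T (-a) w = z :=
  ⟨fun h ↦ by rw [h, T_neg_T ha hz], fun h ↦ by rw [← h, T_T_neg ha hw]⟩

lemma hasDerivAt_T (ha : a ∈ 𝔻) (hz : z ∈ 𝔻) :
    HasDerivAt (T a) (((1 - ‖a‖ ^ 2 : ℝ) : ℂ) / (1 + conj a * z) ^ 2) z := by
  have hquot := ((hasDerivAt_id z).add_const a).div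
    (((hasDerivAt_id z).const_mul (conj a)).const_add 1) (one_add_conj_mul_ne_zero ha hz)
  refine hquot.congr_deriv ?_
  rw [ofReal_one_sub_norm_sq]
  simp only [id]
  ring

lemma hasDerivAt_T_zero (ha : a ∈ 𝔻) : HasDerivAt (T a) ((1 - ‖a‖ ^ 2 : ℝ) : ℂ) 0 := by
  simpa using hasDerivAt_T ha (mem_ball_self one_pos)

lemma hasDerivAt_T_neg_self (ha : a ∈ 𝔻) :
    HasDerivAt (T (-a)) ((1 - ‖a‖ ^ 2 : ℝ) : ℂ)⁻¹ a := by
  refine (hasDerivAt_T (neg_mem_unitBall ha) ha).congr_deriv ?_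
  have hne := ofReal_one_sub_norm_sq_ne_zero ha
  rw [norm_neg, map_neg, neg_mul, ← sub_eq_add_neg, ← ofReal_one_sub_norm_sq]
  field_simp

lemma hclass_T (ha : a ∈ 𝔻) : Hclass (T a) :=
  ⟨fun _ hz ↦ (hasDerivAt_T ha hz).differentiableAt.differentiableWithinAt,
    fun _ hz ↦ T_mem_unitBall ha hz⟩

end Mobius

section Hclass

variable {f g : ℂ → ℂ} {z : ℂ}

lemma Hclass.differentiableAt (hf : Hclass f) (hz : z ∈ 𝔻) : DifferentiableAt ℂ f z :=
  hf.1.differentiableAt (isOpen_ball.mem_nhds hz)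

lemma Hclass.comp (hg : Hclass g) (hf : Hclass f) : Hclass (g ∘ f) :=
  ⟨hg.1.comp hf.1 hf.2, hg.2.comp hf.2⟩

lemma Hclass.const_mul (hf : Hclass f) {α : ℂ} (hα : ‖α‖ ≤ 1) : Hclass (fun z ↦ α * f z) :=
  ⟨hf.1.const_mul α, fun z hz ↦ mem_ball_zero_iff.mpr <| by
    simpa using mul_lt_one_of_nonneg_of_lt_one_right hα (norm_nonneg _)
      (mem_ball_zero_iff.mp (hf.2 hz))⟩

lemma hclass_of_norm_le_one (hf : DifferentiableOn ℂ f 𝔻) (hle : ∀ w ∈ 𝔻, ‖f w‖ ≤ 1)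
    (hz : z ∈ 𝔻) (hlt : ‖f z‖ < 1) : Hclass f := by
  refine ⟨hf, fun w hw ↦ mem_ball_zero_iff.mpr ((hle w hw).lt_of_ne fun hw₁ ↦ ?_)⟩
  have hmax : IsMaxOn (norm ∘ f) 𝔻 w := fun v hv ↦ by simpa [hw₁] using hle v hv
  have hnorm : ‖f z‖ = ‖f w‖ := norm_eqOn_of_isPreconnected_of_isMaxOn
    (convex_ball (0 : ℂ) 1).isPreconnected isOpen_ball hf hw hmax hz
  exact (hlt.trans_eq hw₁.symm).ne hnorm

lemma Hclass.deriv_eq_mul_H1 (hf : Hclass f) (hz : z ∈ 𝔻) :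
    deriv f z = ((1 - ‖f z‖ ^ 2 : ℝ) : ℂ) / ((1 - ‖z‖ ^ 2 : ℝ) : ℂ) * H1 f z := by
  have hne := ofReal_one_sub_norm_sq_ne_zero hz
  have hne' := ofReal_one_sub_norm_sq_ne_zero (hf.2 hz)
  rw [H1]
  field_simp

end Hclass

/-- The self-map `f` of the disk, with `z₀` and `f z₀` both moved to the origin by Möbius
transformations, so that the classical Schwarz lemma applies to it. -/
noncomputable def mobiusNormalization (f : ℂ → ℂ) (z₀ w : ℂ) : ℂ := T (-f z₀) (f (T z₀ w))

/-- The hyperbolic difference quotient `T_{-f(z₀)}(f(z)) / T_{-z₀}(z)`, continued analytically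
through `z = z₀` by taking the `dslope` of the normalised map at the origin. -/
noncomputable def hypDiffQuot (f : ℂ → ℂ) (z₀ z : ℂ) : ℂ :=
  dslope (mobiusNormalization f z₀) 0 (T (-z₀) z)

section HyperbolicDifferenceQuotient

variable {f g : ℂ → ℂ} {z₀ z : ℂ}

lemma mobiusNormalization_zero (f : ℂ → ℂ) (z₀ : ℂ) : mobiusNormalization f z₀ 0 = 0 := by
  rw [mobiusNormalization, T_zero_right, T_neg_self]

lemma Hclass.hclass_mobiusNormalization (hf : Hclass f) (hz₀ : z₀ ∈ 𝔻) :
    Hclass (mobiusNormalization f z₀) :=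
  (hclass_T (neg_mem_unitBall (hf.2 hz₀))).comp (hf.comp (hclass_T hz₀))

lemma Hclass.mapsTo_closedBall_mobiusNormalization (hf : Hclass f) (hz₀ : z₀ ∈ 𝔻) :
    Set.MapsTo (mobiusNormalization f z₀) 𝔻 (closedBall (mobiusNormalization f z₀ 0) 1) := by
  rw [mobiusNormalization_zero]
  exact (hf.hclass_mobiusNormalization hz₀).2.mono_right ball_subset_closedBall

lemma Hclass.deriv_mobiusNormalization_zero (hf : Hclass f) (hz₀ : z₀ ∈ 𝔻) :
    deriv (mobiusNormalization f z₀) 0 = H1 f z₀ := by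
  have hT : HasDerivAt (T z₀) ((1 - ‖z₀‖ ^ 2 : ℝ) : ℂ) 0 := hasDerivAt_T_zero hz₀
  have hfT : HasDerivAt (f ∘ T z₀) (deriv f z₀ * ((1 - ‖z₀‖ ^ 2 : ℝ) : ℂ)) 0 :=
    (hf.differentiableAt hz₀).hasDerivAt.comp_of_eq 0 hT (T_zero_right z₀).symm
  have hcomp := (hasDerivAt_T_neg_self (hf.2 hz₀)).comp_of_eq 0 hfT (by simp [T_zero_right])
  refine hcomp.deriv.trans ?_
  rw [H1, div_eq_inv_mul, mul_comm (deriv f z₀)]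

lemma Hclass.hypDiffQuot_self (hf : Hclass f) (hz₀ : z₀ ∈ 𝔻) :
    hypDiffQuot f z₀ z₀ = H1 f z₀ := by
  rw [hypDiffQuot, T_neg_self, dslope_same, hf.deriv_mobiusNormalization_zero hz₀]

lemma T_neg_apply_eq_mul_hypDiffQuot (f : ℂ → ℂ) (hz₀ : z₀ ∈ 𝔻) (hz : z ∈ 𝔻) :
    T (-f z₀) (f z) = T (-z₀) z * hypDiffQuot f z₀ z := by
  have hslope := sub_smul_dslope (mobiusNormalization f z₀) 0 (T (-z₀) z)
  rw [mobiusNormalization_zero, sub_zero, sub_zero, smul_eq_mul] at hslope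
  rw [hypDiffQuot, hslope, mobiusNormalization, T_T_neg hz₀ hz]

lemma Hclass.sub_mul_eq_mul_hypDiffQuot (hf : Hclass f) (hz₀ : z₀ ∈ 𝔻) (hz : z ∈ 𝔻) :
    (f z - f z₀) * (1 - conj z₀ * z) =
      (1 - conj (f z₀) * f z) * hypDiffQuot f z₀ z * (z - z₀) := by
  have hden := one_add_conj_mul_ne_zero (neg_mem_unitBall (hf.2 hz₀)) (hf.2 hz)
  have hden₀ := one_add_conj_mul_ne_zero (neg_mem_unitBall hz₀) hz
  have hfactor := T_neg_apply_eq_mul_hypDiffQuot f hz₀ hz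
  rw [T, T, div_mul_eq_mul_div, div_eq_div_iff hden hden₀, map_neg, map_neg] at hfactor
  linear_combination hfactor

lemma Hclass.differentiableOn_hypDiffQuot (hf : Hclass f) (hz₀ : z₀ ∈ 𝔻) :
    DifferentiableOn ℂ (hypDiffQuot f z₀) 𝔻 :=
  have hT := hclass_T (neg_mem_unitBall hz₀)
  ((differentiableOn_dslope (ball_mem_nhds 0 one_pos)).mpr
    (hf.hclass_mobiusNormalization hz₀).1).comp hT.1 hT.2

lemma Hclass.norm_hypDiffQuot_le_one (hf : Hclass f) (hz₀ : z₀ ∈ 𝔻) (hz : z ∈ 𝔻) :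
    ‖hypDiffQuot f z₀ z‖ ≤ 1 := by
  simpa [hypDiffQuot] using norm_dslope_le_div_of_mapsTo_ball (hf.hclass_mobiusNormalization hz₀).1
    (hf.mapsTo_closedBall_mobiusNormalization hz₀) (T_mem_unitBall (neg_mem_unitBall hz₀) hz)

lemma Hclass.hclass_hypDiffQuot (hf : Hclass f) (hz₀ : z₀ ∈ 𝔻) (hH1 : ‖H1 f z₀‖ < 1) :
    Hclass (hypDiffQuot f z₀) :=
  hclass_of_norm_le_one (hf.differentiableOn_hypDiffQuot hz₀)
    (fun _ hz ↦ hf.norm_hypDiffQuot_le_one hz₀ hz) hz₀ (by rwa [hf.hypDiffQuot_self hz₀])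

lemma Hclass.forall_eq_T_mul_iff_forall_hypDiffQuot_eq (hf : Hclass f) (hz₀ : z₀ ∈ 𝔻)
    (hg : Set.MapsTo g 𝔻 (closedBall 0 1)) (hgz₀ : g z₀ = H1 f z₀) :
    (∀ z ∈ 𝔻, f z = T (f z₀) (T (-z₀) z * g z)) ↔ ∀ z ∈ 𝔻, hypDiffQuot f z₀ z = g z := by
  refine forall₂_congr fun z hz ↦ ?_
  have hT := T_mem_unitBall (neg_mem_unitBall hz₀) hz
  have hmul : T (-z₀) z * g z ∈ 𝔻 := by
    simpa using mul_lt_one_of_nonneg_of_lt_one_left (norm_nonneg _)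
      (mem_ball_zero_iff.mp hT) (mem_closedBall_zero_iff.mp (hg hz))
  rw [eq_T_iff_T_neg_eq (hf.2 hz₀) (hf.2 hz) hmul, T_neg_apply_eq_mul_hypDiffQuot f hz₀ hz]
  rcases eq_or_ne z z₀ with rfl | hne
  · simp [T_neg_self, hf.hypDiffQuot_self hz₀, hgz₀]
  · exact mul_right_inj' (T_ne_zero (neg_mem_unitBall hz₀) hz (by simpa using hne))

end HyperbolicDifferenceQuotient

section SchwarzPick

variable {f : ℂ → ℂ} {z₀ α : ℂ}

lemma Hclass.eq_T_const_mul_of_norm_H1_eq_one (hf : Hclass f) (hz₀ : z₀ ∈ 𝔻)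
    (hH1 : ‖H1 f z₀‖ = 1) {z : ℂ} (hz : z ∈ 𝔻) : f z = T (f z₀) (H1 f z₀ * T (-z₀) z) := by
  have hslope : dslope (mobiusNormalization f z₀) 0 0 = H1 f z₀ := by
    rw [dslope_same, hf.deriv_mobiusNormalization_zero hz₀]
  have hrigid := affine_of_mapsTo_ball_of_norm_dslope_eq_div (hf.hclass_mobiusNormalization hz₀).1
    (hf.mapsTo_closedBall_mobiusNormalization hz₀) (mem_ball_self one_pos)
    (by rw [hslope, hH1, div_one]) (T_mem_unitBall (neg_mem_unitBall hz₀) hz)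
  simp only [hslope, mobiusNormalization_zero, zero_add, sub_zero, smul_eq_mul] at hrigid
  rw [mobiusNormalization, T_T_neg hz₀ hz] at hrigid
  rw [mul_comm, ← hrigid, T_T_neg (hf.2 hz₀) (hf.2 hz)]

lemma Hclass.H1_eq_of_eq_T_const_mul (hf : Hclass f) (hz₀ : z₀ ∈ 𝔻)
    (h : ∀ z ∈ 𝔻, f z = T (f z₀) (α * T (-z₀) z)) : H1 f z₀ = α := by
  have heq : f =ᶠ[𝓝 z₀] T (f z₀) ∘ fun z ↦ α * T (-z₀) z :=
    (isOpen_ball.eventually_mem hz₀).mono h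
  have hderiv := (hasDerivAt_T_zero (hf.2 hz₀)).comp_of_eq z₀
    ((hasDerivAt_T_neg_self hz₀).const_mul α) (by simp [T_neg_self])
  have hne := ofReal_one_sub_norm_sq_ne_zero hz₀
  have hne' := ofReal_one_sub_norm_sq_ne_zero (hf.2 hz₀)
  rw [H1, heq.deriv_eq, hderiv.deriv]
  field_simp

theorem Hclass.norm_H1_eq_one_iff (hf : Hclass f) (hz₀ : z₀ ∈ 𝔻) :
    ‖H1 f z₀‖ = 1 ↔ ∃ α : ℂ, ‖α‖ = 1 ∧ ∀ z ∈ 𝔻, f z = T (f z₀) (α * T (-z₀) z) := by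
  refine ⟨fun h ↦ ⟨H1 f z₀, h, fun z hz ↦ hf.eq_T_const_mul_of_norm_H1_eq_one hz₀ h hz⟩, ?_⟩
  rintro ⟨α, hα, h⟩
  rwa [hf.H1_eq_of_eq_T_const_mul hz₀ h]

lemma Hclass.iteratedDeriv_two_mul_sub (hf : Hclass f) (hz₀ : z₀ ∈ 𝔻) :
    iteratedDeriv 2 f z₀ * ((1 - ‖z₀‖ ^ 2 : ℝ) : ℂ) - 2 * conj z₀ * deriv f z₀ =
      2 * (((1 - ‖f z₀‖ ^ 2 : ℝ) : ℂ) * deriv (hypDiffQuot f z₀) z₀ -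
        conj (f z₀) * deriv f z₀ * H1 f z₀) := by
  have hnhds : 𝔻 ∈ 𝓝 z₀ := isOpen_ball.mem_nhds hz₀
  have hqd := hf.differentiableOn_hypDiffQuot hz₀
  have hfc : ContDiffAt ℂ 2 f z₀ := (hf.1.analyticAt hnhds).contDiffAt
  have hqc : ContDiffAt ℂ 2 (hypDiffQuot f z₀) z₀ := (hqd.analyticAt hnhds).contDiffAt
  have hfactor : (fun z ↦ (f z - f z₀) * (-conj z₀ * z + 1)) =ᶠ[𝓝 z₀]
      fun z ↦ (1 - conj (f z₀) * f z) * hypDiffQuot f z₀ z * (1 * z + -z₀) := by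
    filter_upwards [hnhds] with z hz
    linear_combination hf.sub_mul_eq_mul_hypDiffQuot hz₀ hz
  have hderiv₂_sub : iteratedDeriv 2 (fun z ↦ f z - f z₀) z₀ = iteratedDeriv 2 f z₀ := by
    simp only [iteratedDeriv_succ, iteratedDeriv_zero, deriv_sub_const_fun]
  have hderiv_den : HasDerivAt (fun z ↦ 1 - conj (f z₀) * f z) (-(conj (f z₀) * deriv f z₀)) z₀ :=
    ((hf.differentiableAt hz₀).hasDerivAt.const_mul _).const_sub 1
  have hderiv_mul := hderiv_den.fun_mul (hqd.differentiableAt hnhds).hasDerivAt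
  have hleibniz := hfactor.iteratedDeriv_eq 2
  rw [iteratedDeriv_two_mul_affine (hfc.sub contDiffAt_const),
    iteratedDeriv_two_mul_affine ((contDiffAt_const.sub (contDiffAt_const.mul hfc)).mul hqc),
    hderiv₂_sub, deriv_sub_const, hderiv_mul.deriv, hf.hypDiffQuot_self hz₀] at hleibniz
  rw [ofReal_one_sub_norm_sq, ofReal_one_sub_norm_sq]
  linear_combination hleibniz

theorem Hclass.iteratedDeriv_two_sub_eq_mul_H1_hypDiffQuot (hf : Hclass f) (hz₀ : z₀ ∈ 𝔻)
    (hH1 : ‖H1 f z₀‖ < 1) :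
    iteratedDeriv 2 f z₀ -
        2 * ((1 - ‖f z₀‖ ^ 2 : ℝ) : ℂ) / ((1 - ‖z₀‖ ^ 2 : ℝ) : ℂ) ^ 2 *
          (conj z₀ - conj (f z₀) * H1 f z₀) * H1 f z₀ =
      ((2 * (1 - ‖f z₀‖ ^ 2) * (1 - ‖H1 f z₀‖ ^ 2) / (1 - ‖z₀‖ ^ 2) ^ 2 : ℝ) : ℂ) *
        H1 (hypDiffQuot f z₀) z₀ := by
  have hne := ofReal_one_sub_norm_sq_ne_zero hz₀
  have hderiv₂ := hf.iteratedDeriv_two_mul_sub hz₀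
  rw [(hf.hclass_hypDiffQuot hz₀ hH1).deriv_eq_mul_H1 hz₀, hf.hypDiffQuot_self hz₀,
    hf.deriv_eq_mul_H1 hz₀, sub_eq_iff_eq_add, ← eq_div_iff hne] at hderiv₂
  rw [hderiv₂]
  simp only [ofReal_div, ofReal_mul, ofReal_pow, ofReal_ofNat]
  field_simp
  ring

end SchwarzPick

/-- Equality case in the Schwarz-Pick Lemma of second derivative:
`|f''(z₀) - c₂| = ρ₂` iff `f(z) = T_{γ₀}(T_{-z₀}(z)·T_{γ₁}(α·T_{-z₀}(z)))` for some
unimodular constant `α`. -/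
theorem schwarz_pick_second_equality (z₀ γ₀ γ₁ : ℂ)
    (hz₀ : z₀ ∈ ball (0 : ℂ) 1) (hγ₀ : γ₀ ∈ ball (0 : ℂ) 1)
    (hγ₁ : γ₁ ∈ ball (0 : ℂ) 1)
    (f : ℂ → ℂ) (hf : Hclass f) (hfz₀ : f z₀ = γ₀) (hH1 : H1 f z₀ = γ₁) :
    ‖iteratedDeriv 2 f z₀ -
        2 * ((1 - ‖γ₀‖ ^ 2 : ℝ) : ℂ) / ((1 - ‖z₀‖ ^ 2 : ℝ) : ℂ) ^ 2 *
          ((starRingEnd ℂ) z₀ - (starRingEnd ℂ) γ₀ * γ₁) * γ₁‖ =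
      2 * (1 - ‖γ₀‖ ^ 2) * (1 - ‖γ₁‖ ^ 2) / (1 - ‖z₀‖ ^ 2) ^ 2 ↔
      ∃ α : ℂ, ‖α‖ = 1 ∧
        ∀ z ∈ ball (0 : ℂ) 1, f z = T γ₀ (T (-z₀) z * T γ₁ (α * T (-z₀) z)) := by
  subst hfz₀ hH1
  have hH1 : ‖H1 f z₀‖ < 1 := mem_ball_zero_iff.mp hγ₁
  have hq : Hclass (hypDiffQuot f z₀) := hf.hclass_hypDiffQuot hz₀ hH1
  have hρ : 0 < 2 * (1 - ‖f z₀‖ ^ 2) * (1 - ‖H1 f z₀‖ ^ 2) / (1 - ‖z₀‖ ^ 2) ^ 2 := by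
    have := one_sub_norm_sq_pos hz₀
    have := one_sub_norm_sq_pos hγ₀
    have := one_sub_norm_sq_pos hγ₁
    positivity
  rw [hf.iteratedDeriv_two_sub_eq_mul_H1_hypDiffQuot hz₀ hH1, norm_mul,
    Complex.norm_of_nonneg hρ.le, mul_eq_left₀ hρ.ne', hq.norm_H1_eq_one_iff hz₀,
    hf.hypDiffQuot_self hz₀]
  refine exists_congr fun α ↦ and_congr_right fun hα ↦ ?_
  have hg := (hclass_T hγ₁).comp ((hclass_T (neg_mem_unitBall hz₀)).const_mul hα.le)
  exact (hf.forall_eq_T_mul_iff_forall_hypDiffQuot_eq hz₀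
    (hg.2.mono_right ball_subset_closedBall) (by simp [T_neg_self, T_zero_right])).symm
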